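/- Let ν : ℤ_{>0} → ℤ_{≥0} be finitely supported, and set P(X) = Π_{r≥1} Φ_r(X)^{ν(r)} ∈ ℤ[X]. Then P(X) divides P(X²) in ℚ[X] if and only if ν(r) ≥ ν(2r) for every integer r ≥ 1. -/

import Mathlib

open Polynomial

/-! Over an algebraically closed field of characteristic zero, divisibility of polynomials is
comparison of root multiplicities. A root of unity `ζ` of order `r` has multiplicity `ν r` in
`P = ∏ Φ_r ^ ν r`. For `n ≠ 0` the map `x ↦ x ^ n` is unramified at `ζ`, so the multiplicity of `ζ`
in `P(X ^ n)` is that of `ζ ^ n` in `P`; as `ζ ^ n` has order `r / gcd r n`, this multiplicity is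
`ν (r / gcd r n)`. -/

section RootMultiplicity

theorem rootMultiplicity_eq_one_of_isRoot_of_eval_derivative_ne_zero {R : Type*} [CommRing R]
    {p : R[X]} {a : R} (ha : p.IsRoot a) (ha' : (derivative p).eval a ≠ 0) :
    rootMultiplicity a p = 1 := by
  have hp : p ≠ 0 := by
    rintro rfl
    simp at ha'
  have not_one_lt : ¬ 1 < rootMultiplicity a p := fun h =>
    ha' ((one_lt_rootMultiplicity_iff_isRoot hp).1 h).2
  have pos : 0 < rootMultiplicity a p := (rootMultiplicity_pos hp).2 ha
  omega

variable {R : Type*} [CommRing R] [IsDomain R]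

theorem rootMultiplicity_pow_eq_mul (p : R[X]) (k : ℕ) (a : R) :
    rootMultiplicity a (p ^ k) = k * rootMultiplicity a p := by
  classical rw [← count_roots, roots_pow, Multiset.count_nsmul, count_roots]

theorem rootMultiplicity_prod_eq_sum {ι : Type*} (s : Finset ι) {p : ι → R[X]}
    (hp : ∏ i ∈ s, p i ≠ 0) (a : R) :
    rootMultiplicity a (∏ i ∈ s, p i) = ∑ i ∈ s, rootMultiplicity a (p i) := by
  classical
  simp only [← count_roots, roots_prod p s hp, Multiset.count_bind]
  rfl

theorem rootMultiplicity_comp_of_eval_derivative_ne_zero (p : R[X]) {q : R[X]} {a : R}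
    (ha : (derivative q).eval a ≠ 0) :
    rootMultiplicity a (p.comp q) = rootMultiplicity (q.eval a) p := by
  obtain rfl | hp := eq_or_ne p 0
  · simp
  set b := q.eval a with hb
  obtain ⟨s, hps, hs⟩ := exists_eq_pow_rootMultiplicity_mul_and_not_dvd p hp b
  have comp_eq : p.comp q = (q - C b) ^ rootMultiplicity b p * s.comp q := by
    conv_lhs => rw [hps]
    simp
  have simple_root : rootMultiplicity a (q - C b) = 1 :=
    rootMultiplicity_eq_one_of_isRoot_of_eval_derivative_ne_zero (by simp [hb]) (by simpa using ha)
  have not_isRoot : ¬ (s.comp q).IsRoot a := by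
    rwa [IsRoot.def, eval_comp, ← IsRoot.def, ← dvd_iff_isRoot]
  have sub_ne_zero : q - C b ≠ 0 := by
    intro h
    simp [h] at simple_root
  have comp_ne_zero : s.comp q ≠ 0 := by
    intro h
    simp [h] at not_isRoot
  rw [comp_eq, rootMultiplicity_mul (mul_ne_zero (pow_ne_zero _ sub_ne_zero) comp_ne_zero),
    rootMultiplicity_pow_eq_mul, simple_root, rootMultiplicity_eq_zero not_isRoot, mul_one,
    add_zero]

end RootMultiplicity

theorem dvd_iff_forall_rootMultiplicity_map_le {K L : Type*} [Field K] [Field L] [IsAlgClosed L]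
    (f : K →+* L) {p q : K[X]} (hp : p ≠ 0) (hq : q ≠ 0) :
    p ∣ q ↔ ∀ a, rootMultiplicity a (p.map f) ≤ rootMultiplicity a (q.map f) := by
  classical
  rw [← map_dvd_map' f,
    IsAlgClosed.dvd_iff_roots_le_roots (map_ne_zero hp) (map_ne_zero hq),
    Multiset.le_iff_count]
  simp only [count_roots]

section Cyclotomic

variable {R : Type*} [CommRing R]

theorem monic_prod_cyclotomic_pow (s : Finset ℕ) (ν : ℕ → ℕ) :
    (∏ r ∈ s, cyclotomic r R ^ ν r).Monic :=
  monic_prod_of_monic _ _ fun r _ => (cyclotomic.monic r R).pow _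

variable [IsDomain R]

theorem rootMultiplicity_cyclotomic (n : ℕ) [NeZero (n : R)] (a : R) :
    rootMultiplicity a (cyclotomic n R) = if orderOf a = n then 1 else 0 := by
  classical
  simp only [← count_roots, cyclotomic.roots_eq_primitiveRoots_val,
    Multiset.count_eq_of_nodup (primitiveRoots n R).nodup, Finset.mem_val,
    mem_primitiveRoots (NeZero.pos_of_neZero_natCast R), IsPrimitiveRoot.iff_orderOf]

variable [CharZero R]

theorem rootMultiplicity_prod_cyclotomic_pow {s : Finset ℕ} (hs : 0 ∉ s) (ν : ℕ → ℕ) (a : R) :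
    rootMultiplicity a (∏ r ∈ s, cyclotomic r R ^ ν r) =
      if orderOf a ∈ s then ν (orderOf a) else 0 := by
  rw [rootMultiplicity_prod_eq_sum s (monic_prod_cyclotomic_pow s ν).ne_zero,
    ← Finset.sum_ite_eq s (orderOf a) ν]
  refine Finset.sum_congr rfl fun r hr => ?_
  have : NeZero r := ⟨ne_of_mem_of_not_mem hr hs⟩
  rw [rootMultiplicity_pow_eq_mul, rootMultiplicity_cyclotomic, mul_ite, mul_one, mul_zero]

variable {ν : ℕ → ℕ} {N : ℕ}

theorem rootMultiplicity_prod_Icc_cyclotomic_pow (hN : ∀ r, N < r → ν r = 0) {a : R}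
    (ha : IsOfFinOrder a) :
    rootMultiplicity a (∏ r ∈ Finset.Icc 1 N, cyclotomic r R ^ ν r) = ν (orderOf a) := by
  rw [rootMultiplicity_prod_cyclotomic_pow (by simp), ite_eq_left_iff, Finset.mem_Icc]
  intro not_mem
  have order_pos := ha.orderOf_pos
  exact (hN _ (by omega)).symm

theorem rootMultiplicity_prod_Icc_cyclotomic_pow_comp_X_pow (hN : ∀ r, N < r → ν r = 0) {n : ℕ}
    (hn : n ≠ 0) {a : R} (ha : IsOfFinOrder a) :
    rootMultiplicity a ((∏ r ∈ Finset.Icc 1 N, cyclotomic r R ^ ν r).comp (X ^ n)) =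
      ν (orderOf a / (orderOf a).gcd n) := by
  have unramified : (derivative (X ^ n : R[X])).eval a ≠ 0 := by
    simp [derivative_X_pow, hn, ha.isUnit.ne_zero]
  rw [rootMultiplicity_comp_of_eval_derivative_ne_zero _ unramified, eval_pow, eval_X,
    rootMultiplicity_prod_Icc_cyclotomic_pow hN ha.pow, orderOf_pow' a hn]

end Cyclotomic

theorem forall_le_div_gcd_prime_iff {α : Type*} [Preorder α] {p : ℕ} (hp : p.Prime) (ν : ℕ → α) :
    (∀ r, 1 ≤ r → ν r ≤ ν (r / r.gcd p)) ↔ ∀ r, 1 ≤ r → ν (p * r) ≤ ν r := by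
  constructor
  · intro h r hr
    simpa [hp.pos] using h (p * r) (Nat.mul_pos hp.pos hr)
  · intro h r hr
    by_cases hpr : p ∣ r
    · obtain ⟨k, rfl⟩ := hpr
      simpa [hp.pos] using h k (Nat.pos_of_mul_pos_left hr)
    · rw [(hp.coprime_iff_not_dvd.2 hpr).symm.gcd_eq_one, Nat.div_one]

theorem stmt_2_general {K : Type*} [Field K] [CharZero K] {ν : ℕ → ℕ} {N : ℕ}
    (hN : ∀ r, N < r → ν r = 0) {n : ℕ} (hn : n ≠ 0) :
    (∏ r ∈ Finset.Icc 1 N, cyclotomic r K ^ ν r) ∣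
        (∏ r ∈ Finset.Icc 1 N, cyclotomic r K ^ ν r).comp (X ^ n) ↔
      ∀ r, 1 ≤ r → ν r ≤ ν (r / r.gcd n) := by
  let L := AlgebraicClosure K
  have monic := monic_prod_cyclotomic_pow (R := K) (Finset.Icc 1 N) ν
  have monic_comp := monic.comp (monic_X_pow n) (by simpa using hn)
  rw [dvd_iff_forall_rootMultiplicity_map_le (algebraMap K L) monic.ne_zero monic_comp.ne_zero]
  simp only [Polynomial.map_comp, Polynomial.map_prod, Polynomial.map_pow, map_cyclotomic, map_X]
  constructor
  · intro h r hr
    have : NeZero r := ⟨by omega⟩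
    obtain ⟨ζ, hζ⟩ := HasEnoughRootsOfUnity.exists_primitiveRoot L r
    have ζ_finite : IsOfFinOrder ζ := hζ.isOfFinOrder (by omega)
    simpa only [rootMultiplicity_prod_Icc_cyclotomic_pow hN ζ_finite,
      rootMultiplicity_prod_Icc_cyclotomic_pow_comp_X_pow hN hn ζ_finite, ← hζ.eq_orderOf]
      using h ζ
  · intro h a
    by_cases ha : IsOfFinOrder a
    · rw [rootMultiplicity_prod_Icc_cyclotomic_pow hN ha,
        rootMultiplicity_prod_Icc_cyclotomic_pow_comp_X_pow hN hn ha]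
      exact h _ ha.orderOf_pos
    · have order_zero : orderOf a = 0 := orderOf_eq_zero ha
      simp [rootMultiplicity_prod_cyclotomic_pow, order_zero]

/-- For a finitely supported `ν : ℤ_{>0} → ℤ_{≥0}` and
`P(X) = Π_{r≥1} Φ_r(X)^{ν(r)} ∈ ℤ[X]`, the polynomial `P(X)` divides `P(X²)` in `ℚ[X]`
if and only if `ν(r) ≥ ν(2r)` for every `r ≥ 1`.  (Finite support is encoded by a bound
`N` with `ν r = 0` for `r > N`.) -/
theorem stmt_2 (ν : ℕ → ℕ) (N : ℕ) (hN : ∀ r : ℕ, N < r → ν r = 0) :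
    (Polynomial.map (Int.castRingHom ℚ)
        (∏ r ∈ Finset.Icc 1 N, Polynomial.cyclotomic r ℤ ^ ν r) ∣
      Polynomial.map (Int.castRingHom ℚ)
        ((∏ r ∈ Finset.Icc 1 N, Polynomial.cyclotomic r ℤ ^ ν r).comp
          (Polynomial.X ^ 2)))
    ↔ ∀ r : ℕ, 1 ≤ r → ν (2 * r) ≤ ν r := by
  simpa only [Polynomial.map_comp, Polynomial.map_prod, Polynomial.map_pow, map_cyclotomic, map_X]
    using (stmt_2_general hN two_ne_zero).trans (forall_le_div_gcd_prime_iff Nat.prime_two ν)
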